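/- Let m, n ≥ 1, set N = m + n, and let S_0 be any map from the set of planar thin rectangles in F' to {1, −1} satisfying (Sq) and (Hex). Then there is exactly one map S from the set of planar empty rectangles in F' to {1, −1} that extends S_0 and satisfies property (S-3) with respect to squares all four of whose rectangles are planar, empty, and in F'. -/

import Mathlib

/-- A rectangle `r(σ, i, j)` on the toroidal grid of size `N`: a flow from the
generator `σ` to the generator `σ^{ij}`. -/
structure GridRect (N : ℕ) where
  perm : Equiv.Perm (Fin N)
  i : Fin N
  j : Fin N
  hij : i ≠ j

namespace GridRect

variable {N : ℕ}

/-- The ending generator `σ^{ij}` of the rectangle `r(σ, i, j)`. -/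
def endPerm (r : GridRect N) : Equiv.Perm (Fin N) :=
  (Equiv.swap r.i r.j).trans r.perm

/-- The domain of the rectangle `r(σ,i,j)`: the indicator function of `C × R` where `C`
is the cyclic interval of columns from `i` to `j` and `R` is the cyclic interval of rows
from `σ(i)` to `σ(j)`. -/
def dom (r : GridRect N) (p : Fin N × Fin N) : ℕ :=
  if (p.1 - r.i < r.j - r.i) ∧ (p.2 - r.perm r.i < r.perm r.j - r.perm r.i) then 1 else 0

/-- A rectangle is planar if `i < j` and `σ(i) < σ(j)`. -/
def Planar (r : GridRect N) : Prop := r.i < r.j ∧ r.perm r.i < r.perm r.j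

/-- A planar rectangle is empty if no column strictly between `i` and `j` is sent strictly
between `σ(i)` and `σ(j)`. -/
def IsEmptyRect (r : GridRect N) : Prop :=
  ¬ ∃ c : Fin N, r.i < c ∧ c < r.j ∧ r.perm r.i < r.perm c ∧ r.perm c < r.perm r.j

/-- A planar rectangle is thin if `j = i + 1`. -/
def Thin (r : GridRect N) : Prop := (r.j : ℕ) = (r.i : ℕ) + 1

end GridRect

/-- The pairs `(r1, r2)` and `(r3, r4)` form a square: they are distinct ordered pairs,
`r1 : x → y`, `r2 : y → z`, `r3 : x → y'`, `r4 : y' → z` with `z ≠ x`, and the domains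
satisfy `D(r1) + D(r2) = D(r3) + D(r4)` pointwise. -/
def IsSquareOf {N : ℕ} (r1 r2 r3 r4 : GridRect N) : Prop :=
  (r1, r2) ≠ (r3, r4) ∧
  r3.perm = r1.perm ∧
  r2.perm = r1.endPerm ∧
  r4.perm = r3.endPerm ∧
  r4.endPerm = r2.endPerm ∧
  r2.endPerm ≠ r1.perm ∧
  ∀ p : Fin N × Fin N, r1.dom p + r2.dom p = r3.dom p + r4.dom p

/-- The set `Σ` of generators `σ` (0-indexed: columns/rows `0,…,m+n−1`) with
`σ(j) ∈ {0,…,m}` for `j < m` and `σ(j) ∈ {m−1,…,m+n−1}` for `j ≥ m`. -/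
def GenSet (m n : ℕ) : Set (Equiv.Perm (Fin (m + n))) :=
  {σ | ∀ j : Fin (m + n), ((j : ℕ) < m → (σ j : ℕ) ≤ m) ∧ (m ≤ (j : ℕ) → m ≤ (σ j : ℕ) + 1)}

/-- The set `F'` of rectangles with both endpoint generators in `Σ`. -/
def FSet (m n : ℕ) : Set (GridRect (m + n)) :=
  {r | r.perm ∈ GenSet m n ∧ r.endPerm ∈ GenSet m n}

/-- The set of planar thin rectangles in `F'`. -/
def PTSet (m n : ℕ) : Set (GridRect (m + n)) :=
  {r | r ∈ FSet m n ∧ r.Planar ∧ r.Thin}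

/-- The set of planar empty rectangles in `F'`. -/
def PESet (m n : ℕ) : Set (GridRect (m + n)) :=
  {r | r ∈ FSet m n ∧ r.Planar ∧ r.IsEmptyRect}

/-- The column `c` as an element of `Fin N`, given `c + 1 < N`. -/
def colFin {N : ℕ} (c : ℕ) (hc : c + 1 < N) : Fin N := ⟨c, Nat.lt_of_succ_lt hc⟩

/-- The column `c + 1` as an element of `Fin N`, given `c + 1 < N`. -/
def colFin' {N : ℕ} (c : ℕ) (hc : c + 1 < N) : Fin N := ⟨c + 1, hc⟩

theorem colNe {N : ℕ} (c : ℕ) (hc : c + 1 < N) : colFin c hc ≠ colFin' c hc := by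
  simp only [colFin, colFin', ne_eq, Fin.mk.injEq]
  omega

/-- The generator `σ·τ_c = σ^{c,c+1}`. -/
def tmul {N : ℕ} (σ : Equiv.Perm (Fin N)) (c : ℕ) (hc : c + 1 < N) : Equiv.Perm (Fin N) :=
  (Equiv.swap (colFin c hc) (colFin' c hc)).trans σ

/-- The unique planar thin rectangle `e(σ, c)` connecting `σ` and `σ·τ_c`: it is
`r(σ, c, c+1)` if `σ(c) < σ(c+1)`, and `r(σ·τ_c, c, c+1)` otherwise. -/
def edgeRect {N : ℕ} (σ : Equiv.Perm (Fin N)) (c : ℕ) (hc : c + 1 < N) : GridRect N :=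
  if σ (colFin c hc) < σ (colFin' c hc) then ⟨σ, colFin c hc, colFin' c hc, colNe c hc⟩
  else ⟨tmul σ c hc, colFin c hc, colFin' c hc, colNe c hc⟩

/-- Property (Sq) for a sign function on the planar thin rectangles in `F'`. -/
def SqCond (m n : ℕ) (S : GridRect (m + n) → ℤ) : Prop :=
  ∀ (σ : Equiv.Perm (Fin (m + n))) (c d : ℕ) (hc : c + 1 < m + n) (hd : d + 1 < m + n),
    (c + 2 ≤ d ∨ d + 2 ≤ c) →
    σ ∈ GenSet m n → tmul σ c hc ∈ GenSet m n → tmul σ d hd ∈ GenSet m n →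
    tmul (tmul σ c hc) d hd ∈ GenSet m n →
    S (edgeRect σ c hc) * S (edgeRect (tmul σ c hc) d hd) *
      S (edgeRect σ d hd) * S (edgeRect (tmul σ d hd) c hc) = -1

/-- Property (Hex) for a sign function on the planar thin rectangles in `F'`. -/
def HexCond (m n : ℕ) (S : GridRect (m + n) → ℤ) : Prop :=
  ∀ (σ : Equiv.Perm (Fin (m + n))) (c : ℕ) (hc1 : c + 1 < m + n) (hc2 : c + 1 + 1 < m + n),
    σ ∈ GenSet m n → tmul σ c hc1 ∈ GenSet m n →
    tmul (tmul σ c hc1) (c + 1) hc2 ∈ GenSet m n →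
    tmul (tmul (tmul σ c hc1) (c + 1) hc2) c hc1 ∈ GenSet m n →
    tmul (tmul σ (c + 1) hc2) c hc1 ∈ GenSet m n →
    tmul σ (c + 1) hc2 ∈ GenSet m n →
    S (edgeRect σ c hc1) * S (edgeRect (tmul σ c hc1) (c + 1) hc2) *
      S (edgeRect (tmul (tmul σ c hc1) (c + 1) hc2) c hc1) *
      S (edgeRect (tmul (tmul (tmul σ c hc1) (c + 1) hc2) c hc1) (c + 1) hc2) *
      S (edgeRect (tmul (tmul σ (c + 1) hc2) c hc1) c hc1) *
      S (edgeRect (tmul σ (c + 1) hc2) (c + 1) hc2) = 1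

/-- Property (S-3) restricted to squares all four of whose rectangles lie in `R`. -/
def SqPropOn {N : ℕ} (R : Set (GridRect N)) (S : GridRect N → ℤ) : Prop :=
  ∀ r1 r2 r3 r4 : GridRect N, IsSquareOf r1 r2 r3 r4 →
    r1 ∈ R → r2 ∈ R → r3 ∈ R → r4 ∈ R → S r1 * S r2 * S r3 * S r4 = -1

theorem exists_clifford (N : ℕ) : ∃ (A : Type) (_ : Ring A) (_ : Algebra ℚ A) (_ : Nontrivial A)
    (E : Fin N → A), (∀ i, E i * E i = 1) ∧ ∀ i j, i ≠ j → E i * E j = - (E j * E i) := by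
  let Q : QuadraticForm ℚ (Fin N → ℚ) := QuadraticMap.weightedSumSquares ℚ (fun _ => (1 : ℚ))
  have : Invertible (2 : ℚ) := invertibleOfNonzero (by norm_num)
  refine ⟨CliffordAlgebra Q, inferInstance, inferInstance, inferInstance,
    fun i => CliffordAlgebra.ι Q (Pi.single i 1), ?_, ?_⟩
  · intro i
    rw [CliffordAlgebra.ι_sq_scalar]
    simp [Q, QuadraticMap.weightedSumSquares_apply, Pi.single_apply]
  · intro i j hij
    rw [eq_neg_iff_add_eq_zero, CliffordAlgebra.ι_mul_ι_add_swap]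
    have : QuadraticMap.polar Q (Pi.single i 1) (Pi.single j 1) = 0 := by
      simp only [QuadraticMap.polar, Q, QuadraticMap.weightedSumSquares_apply, ← Finset.sum_sub_distrib]
      apply Finset.sum_eq_zero
      intro k _
      simp only [Pi.add_apply, Pi.single_apply]
      by_cases h1 : k = i <;> by_cases h2 : k = j <;> simp_all
    rw [this, map_zero]

section
variable {A : Type} [Ring A] {N : ℕ} (E : Fin N → A)
theorem rel_disj (hE : ∀ i j, i ≠ j → E i * E j = - (E j * E i)) {i j k l : Fin N}
    (h1 : i ≠ k) (h2 : i ≠ l) (h3 : j ≠ k) (h4 : j ≠ l) :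
    (E i - E j) * (E k - E l) = - ((E k - E l) * (E i - E j)) := by
  simp only [mul_sub, sub_mul, hE i k h1, hE i l h2, hE j k h3, hE j l h4]
  abel
theorem rel1 (h1 : ∀ i, E i * E i = 1) (hE : ∀ i j, i ≠ j → E i * E j = - (E j * E i)) {a b c : Fin N}
    (hab : a ≠ b) (hbc : b ≠ c) (hac : a ≠ c) :
    (E a - E b) * (E b - E c) = - ((E a - E c) * (E a - E b)) := by
  simp only [mul_sub, sub_mul, hE b a hab.symm, hE c b hbc.symm, hE c a hac.symm, h1]
  abel
theorem rel2 (h1 : ∀ i, E i * E i = 1) (hE : ∀ i j, i ≠ j → E i * E j = - (E j * E i)) {a b c : Fin N}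
    (hab : a ≠ b) (hbc : b ≠ c) (hac : a ≠ c) :
    (E a - E b) * (E b - E c) = - ((E b - E c) * (E a - E c)) := by
  simp only [mul_sub, sub_mul, hE b a hab.symm, hE c b hbc.symm, hE c a hac.symm, h1]
  abel
theorem rel3 (h1 : ∀ i, E i * E i = 1) (hE : ∀ i j, i ≠ j → E i * E j = - (E j * E i)) {a b c : Fin N}
    (hab : a ≠ b) (hbc : b ≠ c) (hac : a ≠ c) :
    (E b - E c) * (E a - E b) = - ((E a - E b) * (E a - E c)) := by
  simp only [mul_sub, sub_mul, hE b a hab.symm, hE c b hbc.symm, hE c a hac.symm, h1]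
  abel
theorem rel4 (h1 : ∀ i, E i * E i = 1) (hE : ∀ i j, i ≠ j → E i * E j = - (E j * E i)) {a b c : Fin N}
    (hab : a ≠ b) (hbc : b ≠ c) (hac : a ≠ c) :
    (E a - E c) * (E b - E c) = - ((E b - E c) * (E a - E b)) := by
  simp only [mul_sub, sub_mul, hE b a hab.symm, hE c b hbc.symm, hE c a hac.symm, h1]
  abel
theorem rel_sq (h1 : ∀ i, E i * E i = 1) (hE : ∀ i j, i ≠ j → E i * E j = - (E j * E i)) {a b : Fin N}
    (hab : a ≠ b) : (E a - E b) * (E a - E b) = 2 := by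
  simp only [mul_sub, sub_mul, hE b a hab.symm, h1]
  rw [← one_add_one_eq_two]
  abel
theorem rel_braid (h1 : ∀ i, E i * E i = 1) (hE : ∀ i j, i ≠ j → E i * E j = - (E j * E i)) {a b c : Fin N}
    (hab : a ≠ b) (hbc : b ≠ c) (hac : a ≠ c) :
    (E a - E b) * (E b - E c) * (E a - E b) = (E b - E c) * (E a - E b) * (E b - E c) := by
  rw [rel1 E h1 hE hab hbc hac, mul_assoc (E b - E c), rel2 E h1 hE hab hbc hac, neg_mul, mul_assoc,
    rel_sq E h1 hE hab, mul_neg, ← mul_assoc, rel_sq E h1 hE hbc]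
  rw [mul_two, two_mul]
end

section
open Equiv
theorem swap_cases {N : ℕ} {i j k l i' j' k' l' : Fin N} (h1 : i < j) (h2 : k < l) (h3 : i' < j')
    (h4 : k' < l')
    (h : ∀ p, swap i j (swap k l p) = swap i' j' (swap k' l' p))
    (hne : ¬ (i = k ∧ j = l)) :
    (i' = k ∧ j' = l) ∨ (k' = i ∧ l' = j) ∨ (i' = i ∧ j' = j ∧ k' = k ∧ l' = l) := by
  have e1 := h i
  have e2 := h j
  have e3 := h k
  have e4 := h l
  have e5 := h k'
  have e6 := h l'
  clear h
  simp only [swap_apply_def] at *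
  grind (splits := 60)

theorem square_core {A : Type} [Ring A] {N : ℕ} (E : Fin N → A) (hE1 : ∀ i, E i * E i = 1)
    (hE : ∀ i j, i ≠ j → E i * E j = - (E j * E i))
    (x : Fin N → Fin N) (hx : Function.Injective x) {i j k l k' l' : Fin N} (h1 : i < j) (h2 : k < l) (h4 : k' < l')
    (h : ∀ p, swap i j (swap k l p) = swap k l (swap k' l' p))
    (hne : ¬ (i = k ∧ j = l))
    (v1 : x i < x j) (v2 : x (swap i j k) < x (swap i j l)) (v3 : x k < x l)
    (em1 : ∀ c, i < c → c < j → x i < x c → x c < x j → False)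
    (em2 : ∀ c, k < c → c < l → x k < x c → x c < x l → False) :
    (E i - E j) * (E k - E l) = - ((E k - E l) * (E k' - E l')) := by
  have e1 := h (swap k l i)
  have e2 := h (swap k l j)
  have e5 := h k'
  have e6 := h l'
  clear h
  rw [swap_apply_self] at e1 e2
  simp only [swap_apply_def] at v2 e1 e2 e5 e6
  by_cases hik : i = k
  · subst hik
    rcases lt_trichotomy j l with hjl | hjl | hjl
    · exfalso
      apply em2 j h1 hjl v1
      simpa [hjl.ne, hjl.ne', h1.ne, h1.ne', h2.ne, h2.ne'] using v2
    · exact absurd ⟨rfl, hjl⟩ hne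
    · have : k' = l ∧ l' = j := by grind (splits := 30)
      rw [this.1, this.2]
      rw [rel1 E hE1 hE h2.ne hjl.ne h1.ne, neg_neg]
  by_cases hjl : j = l
  · subst hjl
    rcases lt_trichotomy i k with hik' | hik' | hik'
    · have : k' = i ∧ l' = k := by grind (splits := 30)
      rw [this.1, this.2]
      exact rel4 E hE1 hE hik'.ne h2.ne h1.ne
    · exact absurd hik' hik
    · exfalso
      have hki : x k < x i := by
        simpa [hik'.ne, hik'.ne', h1.ne, h1.ne', h2.ne, h2.ne'] using v2
      exact em2 i hik' h1 hki v1
  by_cases hjk : j = k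
  · subst hjk
    have : k' = i ∧ l' = l := by grind (splits := 30)
    rw [this.1, this.2]
    exact rel2 E hE1 hE h1.ne h2.ne (h1.trans h2).ne
  by_cases hil : i = l
  · subst hil
    have : k' = k ∧ l' = j := by grind (splits := 30)
    rw [this.1, this.2]
    exact rel3 E hE1 hE h2.ne h1.ne (h2.trans h1).ne
  have : k' = i ∧ l' = j := by grind (splits := 30)
  rw [this.1, this.2]
  exact rel_disj E hE hik hil hjk hjl

/-- The Clifford element attached to a rectangle. -/
def rectElt {A : Type} [Ring A] {N : ℕ} (E : Fin N → A) (r : GridRect N) : A := E r.i - E r.j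

theorem square_rel {A : Type} [Ring A] {N : ℕ} (E : Fin N → A) (hE1 : ∀ i, E i * E i = 1)
    (hE : ∀ i j, i ≠ j → E i * E j = - (E j * E i)) {r1 r2 r3 r4 : GridRect N}
    (hsq : IsSquareOf r1 r2 r3 r4)
    (p1 : r1.Planar) (p2 : r2.Planar) (p3 : r3.Planar) (p4 : r4.Planar)
    (m1 : r1.IsEmptyRect) (m3 : r3.IsEmptyRect) :
    rectElt E r1 * rectElt E r2 = - (rectElt E r3 * rectElt E r4) := by
  obtain ⟨x, i, j, hij⟩ := r1
  obtain ⟨y, k, l, hkl⟩ := r2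
  obtain ⟨x', i', j', hij'⟩ := r3
  obtain ⟨y', k', l', hkl'⟩ := r4
  obtain ⟨hd, e1, e2, e3, e4, hz, -⟩ := hsq
  simp only [GridRect.endPerm, GridRect.Planar, GridRect.IsEmptyRect, rectElt] at *
  subst e1 e2 e3
  have h : ∀ p, swap i j (swap k l p) = swap i' j' (swap k' l' p) := by
    intro p
    have := congrArg (fun f => f p) e4
    simpa using this.symm
  have hne : ¬ (i = k ∧ j = l) := by
    rintro ⟨rfl, rfl⟩
    apply hz
    ext p
    simp
  have hne' : ¬ (i' = k' ∧ j' = l') := by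
    rintro ⟨rfl, rfl⟩
    apply hz
    ext p
    simp only [trans_apply, h, swap_apply_self]
  rcases swap_cases p1.1 p2.1 p3.1 p4.1 h hne with ⟨rfl, rfl⟩ | ⟨rfl, rfl⟩ | ⟨rfl, rfl, rfl, rfl⟩
  · exact square_core E hE1 hE x' x'.injective p1.1 p2.1 p4.1 h hne p1.2 (by simpa using p2.2) p3.2
      (fun c h1 h2 h3 h4 => m1 ⟨c, h1, h2, h3, h4⟩) (fun c h1 h2 h3 h4 => m3 ⟨c, h1, h2, h3, h4⟩)
  · rw [square_core E hE1 hE x' x'.injective p3.1 p4.1 p2.1 (fun p => (h p).symm) hne' p3.2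
      (by simpa using p4.2) p1.2
      (fun c h1 h2 h3 h4 => m3 ⟨c, h1, h2, h3, h4⟩) (fun c h1 h2 h3 h4 => m1 ⟨c, h1, h2, h3, h4⟩), neg_neg]
  · exact absurd rfl hd
end

section
open Equiv

theorem fin_sub_lt {N : ℕ} {i j : Fin N} (hij : i < j) (p : Fin N) :
    p - i < j - i ↔ i ≤ p ∧ p < j := by
  rw [Fin.lt_def, Fin.le_def, Fin.lt_def, Fin.val_sub, Fin.val_sub]
  rw [Fin.lt_def] at hij
  have hp := p.2
  have hj := j.2
  have h1 : (N - (i : ℕ) + j) % N = j - i := by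
    rw [show N - (i : ℕ) + j = (j - i) + N by omega, Nat.add_mod_right, Nat.mod_eq_of_lt (by omega)]
  rw [h1]
  by_cases h : (i : ℕ) ≤ p
  · rw [show N - (i : ℕ) + p = (p - i) + N by omega, Nat.add_mod_right, Nat.mod_eq_of_lt (by omega)]
    omega
  · rw [Nat.mod_eq_of_lt (by omega)]
    omega

theorem dom_eq {N : ℕ} (r : GridRect N) {i j a b : Fin N} (hi : r.i = i) (hj : r.j = j)
    (ha : r.perm i = a) (hb : r.perm j = b) (hij : i < j) (hab : a < b) (p : Fin N × Fin N) :
    r.dom p = if (i ≤ p.1 ∧ p.1 < j) ∧ (a ≤ p.2 ∧ p.2 < b) then 1 else 0 := by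
  subst hi hj ha hb
  simp only [GridRect.dom, fin_sub_lt hij, fin_sub_lt hab]

variable {N : ℕ} {i c j : Fin N}

theorem ind_add {p q : Fin N} {i c j lo a b : Fin N} (h1 : i < c) (h2 : c < j) (h3 : lo < a) (h4 : a < b) :
    ((if (i ≤ p ∧ p < c) ∧ (lo ≤ q ∧ q < a) then 1 else 0) +
      (if (i ≤ p ∧ p < j) ∧ (a ≤ q ∧ q < b) then 1 else 0) : ℕ) =
    (if (c ≤ p ∧ p < j) ∧ (a ≤ q ∧ q < b) then 1 else 0) +
      (if (i ≤ p ∧ p < c) ∧ (lo ≤ q ∧ q < b) then 1 else 0) := by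
  split_ifs <;> omega

theorem ind_add2 {p q : Fin N} {i c j lo a b : Fin N} (h1 : i < c) (h2 : c < j) (h3 : lo < a) (h4 : a < b) :
    ((if (i ≤ p ∧ p < j) ∧ (lo ≤ q ∧ q < a) then 1 else 0) +
      (if (i ≤ p ∧ p < c) ∧ (a ≤ q ∧ q < b) then 1 else 0) : ℕ) =
    (if (i ≤ p ∧ p < c) ∧ (lo ≤ q ∧ q < b) then 1 else 0) +
      (if (c ≤ p ∧ p < j) ∧ (lo ≤ q ∧ q < a) then 1 else 0) := by
  split_ifs <;> omega

theorem ind_add3 {p q : Fin N} {i c j lo a b : Fin N} (h1 : i < c) (h2 : c < j) (h3 : lo < a) (h4 : a < b) :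
    ((if (i ≤ p ∧ p < j) ∧ (a ≤ q ∧ q < b) then 1 else 0) +
      (if (c ≤ p ∧ p < j) ∧ (lo ≤ q ∧ q < a) then 1 else 0) : ℕ) =
    (if (c ≤ p ∧ p < j) ∧ (lo ≤ q ∧ q < b) then 1 else 0) +
      (if (i ≤ p ∧ p < c) ∧ (a ≤ q ∧ q < b) then 1 else 0) := by
  split_ifs <;> omega

theorem ind_add4 {p q : Fin N} {i c j lo a b : Fin N} (h1 : i < c) (h2 : c < j) (h3 : lo < a) (h4 : a < b) :
    ((if (c ≤ p ∧ p < j) ∧ (a ≤ q ∧ q < b) then 1 else 0) +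
      (if (i ≤ p ∧ p < j) ∧ (lo ≤ q ∧ q < a) then 1 else 0) : ℕ) =
    (if (i ≤ p ∧ p < c) ∧ (lo ≤ q ∧ q < a) then 1 else 0) +
      (if (c ≤ p ∧ p < j) ∧ (lo ≤ q ∧ q < b) then 1 else 0) := by
  split_ifs <;> omega

/-- Case A1: `(σ(i), σ(c), σ(j)) = (a, lo, b)`, neighbour `c` of `i`. -/
theorem square_A1 (σ : Perm (Fin N)) (hic : i < c) (hcj : c < j) (h1 : σ c < σ i) (h2 : σ i < σ j) :
    IsSquareOf ⟨(swap i c).trans σ, i, c, hic.ne⟩ ⟨σ, i, j, (hic.trans hcj).ne⟩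
      ⟨(swap i c).trans σ, c, j, hcj.ne⟩ ⟨(swap i c).trans ((swap i j).trans σ), i, c, hic.ne⟩ := by
  have hij := hic.trans hcj
  refine ⟨?_, rfl, ?_, ?_, ?_, ?_, ?_⟩
  · simp [hic.ne]
  · ext p; simp [GridRect.endPerm]
  · ext p; congr 1; simp only [GridRect.endPerm, trans_apply, swap_apply_def]; grind
  · ext p; simp [GridRect.endPerm]
  · intro h
    have := congrArg (fun f => f j) h
    simp [GridRect.endPerm, swap_apply_def] at this
    grind
  · intro p
    rw [dom_eq _ rfl rfl (a := σ c) (b := σ i) ?_ ?_ hic h1,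
      dom_eq _ rfl rfl (a := σ i) (b := σ j) ?_ ?_ hij h2,
      dom_eq _ rfl rfl (a := σ i) (b := σ j) ?_ ?_ hcj h2,
      dom_eq _ rfl rfl (a := σ c) (b := σ j) ?_ ?_ hic (h1.trans h2)]
    · exact ind_add hic hcj h1 h2
    all_goals (simp only [trans_apply, swap_apply_def] <;> grind)

/-- Case A2: `(σ(i), σ(c), σ(j)) = (a, hi, b)`, neighbour `c` of `i`. -/
theorem square_A2 (σ : Perm (Fin N)) (hic : i < c) (hcj : c < j) (h1 : σ i < σ j) (h2 : σ j < σ c) :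
    IsSquareOf ⟨σ, i, j, (hic.trans hcj).ne⟩ ⟨(swap i j).trans σ, i, c, hic.ne⟩
      ⟨σ, i, c, hic.ne⟩ ⟨(swap i c).trans σ, c, j, hcj.ne⟩ := by
  have hij := hic.trans hcj
  refine ⟨?_, rfl, rfl, rfl, ?_, ?_, ?_⟩
  · simp [hcj.ne']
  · ext p; congr 1; simp only [GridRect.endPerm, trans_apply, swap_apply_def]; grind
  · intro h
    have := congrArg (fun f => f j) h
    simp [GridRect.endPerm, swap_apply_def] at this
    grind
  · intro p
    rw [dom_eq _ rfl rfl (a := σ i) (b := σ j) ?_ ?_ hij h1,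
      dom_eq _ rfl rfl (a := σ j) (b := σ c) ?_ ?_ hic h2,
      dom_eq _ rfl rfl (a := σ i) (b := σ c) ?_ ?_ hic (h1.trans h2),
      dom_eq _ rfl rfl (a := σ i) (b := σ j) ?_ ?_ hcj h1]
    · exact ind_add2 hic hcj h1 h2
    all_goals (simp only [trans_apply, swap_apply_def] <;> grind)

/-- Case B1: `(σ(i), σ(c), σ(j)) = (a, lo, b)`, neighbour `c` of `j`. -/
theorem square_B1 (σ : Perm (Fin N)) (hic : i < c) (hcj : c < j) (h1 : σ c < σ i) (h2 : σ i < σ j) :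
    IsSquareOf ⟨σ, i, j, (hic.trans hcj).ne⟩ ⟨(swap i j).trans σ, c, j, hcj.ne⟩
      ⟨σ, c, j, hcj.ne⟩ ⟨(swap c j).trans σ, i, c, hic.ne⟩ := by
  have hij := hic.trans hcj
  refine ⟨?_, rfl, rfl, rfl, ?_, ?_, ?_⟩
  · simp [hic.ne]
  · ext p; congr 1; simp only [GridRect.endPerm, trans_apply, swap_apply_def]; grind
  · intro h
    have := congrArg (fun f => f i) h
    simp [GridRect.endPerm, swap_apply_def] at this
    grind
  · intro p
    rw [dom_eq _ rfl rfl (a := σ i) (b := σ j) ?_ ?_ hij h2,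
      dom_eq _ rfl rfl (a := σ c) (b := σ i) ?_ ?_ hcj h1,
      dom_eq _ rfl rfl (a := σ c) (b := σ j) ?_ ?_ hcj (h1.trans h2),
      dom_eq _ rfl rfl (a := σ i) (b := σ j) ?_ ?_ hic h2]
    · exact ind_add3 hic hcj h1 h2
    all_goals (simp only [trans_apply, swap_apply_def] <;> grind)

/-- Case B2: `(σ(i), σ(c), σ(j)) = (a, hi, b)`, neighbour `c` of `j`. -/
theorem square_B2 (σ : Perm (Fin N)) (hic : i < c) (hcj : c < j) (h1 : σ i < σ j) (h2 : σ j < σ c) :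
    IsSquareOf ⟨(swap c j).trans σ, c, j, hcj.ne⟩ ⟨σ, i, j, (hic.trans hcj).ne⟩
      ⟨(swap c j).trans σ, i, c, hic.ne⟩ ⟨(swap c j).trans ((swap i j).trans σ), c, j, hcj.ne⟩ := by
  have hij := hic.trans hcj
  refine ⟨?_, rfl, ?_, ?_, ?_, ?_, ?_⟩
  · simp [hic.ne']
  · ext p; simp [GridRect.endPerm]
  · ext p; congr 1; simp only [GridRect.endPerm, trans_apply, swap_apply_def]; grind
  · ext p; simp [GridRect.endPerm]
  · intro h
    have := congrArg (fun f => f i) h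
    simp [GridRect.endPerm, swap_apply_def] at this
    grind
  · intro p
    rw [dom_eq _ rfl rfl (a := σ j) (b := σ c) ?_ ?_ hcj h2,
      dom_eq _ rfl rfl (a := σ i) (b := σ j) ?_ ?_ hij h1,
      dom_eq _ rfl rfl (a := σ i) (b := σ j) ?_ ?_ hic h1,
      dom_eq _ rfl rfl (a := σ i) (b := σ c) ?_ ?_ hcj (h1.trans h2)]
    · exact ind_add4 hic hcj h1 h2
    all_goals (simp only [trans_apply, swap_apply_def] <;> grind)

theorem gen_swap {m n : ℕ} {σ : Perm (Fin (m + n))} (h : σ ∈ GenSet m n) {i j : Fin (m + n)}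
    (hb : (i : ℕ) < m ↔ (j : ℕ) < m) : (swap i j).trans σ ∈ GenSet m n := by
  intro p
  have hi := h i
  have hj := h j
  have hp := h p
  simp only [trans_apply, swap_apply_def]
  split_ifs with h1 h2
  · subst h1; omega
  · subst h2; omega
  · exact hp

theorem mem_PT {m n : ℕ} {σ : Perm (Fin (m + n))} {i j : Fin (m + n)} (hij : i ≠ j)
    (h1 : σ ∈ GenSet m n) (h2 : (swap i j).trans σ ∈ GenSet m n) (hj : (j : ℕ) = i + 1)
    (hv : σ i < σ j) : (⟨σ, i, j, hij⟩ : GridRect (m + n)) ∈ PTSet m n :=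
  ⟨⟨h1, h2⟩, ⟨by rw [Fin.lt_def]; simp only; omega, hv⟩, hj⟩

theorem PT_sub_PE {m n : ℕ} {r : GridRect (m + n)} (h : r ∈ PTSet m n) : r ∈ PESet m n := by
  obtain ⟨h1, h2, h3⟩ := h
  refine ⟨h1, h2, ?_⟩
  rintro ⟨c, hc1, hc2, -⟩
  rw [Fin.lt_def] at hc1 hc2
  unfold GridRect.Thin at h3
  omega

theorem exists_reduction {m n : ℕ} (r : GridRect (m + n)) (hr : r ∈ PESet m n) (ht : ¬ r.Thin) :
    ∃ r' ∈ PESet m n, ∃ e1 ∈ PTSet m n, ∃ e2 ∈ PTSet m n,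
      (r'.j : ℕ) - r'.i < (r.j : ℕ) - r.i ∧ (IsSquareOf r e2 e1 r' ∨ IsSquareOf e1 r r' e2) := by
  obtain ⟨σ, i, j, hij⟩ := r
  obtain ⟨⟨hσ, hy⟩, ⟨hlt, hv⟩, hem⟩ := hr
  simp only [GridRect.Thin, GridRect.IsEmptyRect, GridRect.endPerm] at *
  have hjlt := j.2
  have hlt' : (i : ℕ) < j := hlt
  by_cases hb : (i : ℕ) + 1 < m ∨ m ≤ (i : ℕ)
  · let c : Fin (m + n) := ⟨i + 1, by omega⟩
    have hcv : (c : ℕ) = i + 1 := rfl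
    have hic : i < c := by rw [Fin.lt_def]; omega
    have hcj : c < j := by rw [Fin.lt_def]; omega
    have hblk : (i : ℕ) < m ↔ (c : ℕ) < m := by omega
    clear_value c
    have hne : σ c ≠ σ i := fun h => hic.ne' (σ.injective h)
    have hne2 : σ c ≠ σ j := fun h => hcj.ne (σ.injective h)
    have g1 := gen_swap hσ hblk
    have g2 := gen_swap hy hblk
    by_cases hlo : σ c < σ i
    · refine ⟨_, ⟨⟨g1, ?_⟩, ⟨hcj, ?_⟩, ?_⟩, _, mem_PT hic.ne g1 ?_ hcv ?_, _,
        mem_PT hic.ne g2 ?_ hcv ?_, ?_, Or.inr (square_A1 σ hic hcj hlo hv)⟩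
      · convert g2 using 1
        ext p; congr 1; simp only [GridRect.endPerm, trans_apply, swap_apply_def]; grind
      · simp only [trans_apply, swap_apply_def]; grind
      · rintro ⟨q, q1, q2, q3, q4⟩
        simp only [trans_apply, swap_apply_def] at q1 q2 q3 q4
        apply hem
        refine ⟨q, ?_⟩
        grind
      · convert hσ using 1
        ext p; simp
      · simpa using hlo
      · convert hy using 1
        ext p; simp
      · simp only [trans_apply, swap_apply_def]; grind
      · simp only; omega
    · have hhi : σ j < σ c := by
        by_contra hcon
        exact hem ⟨c, hic, hcj, lt_of_le_of_ne (not_lt.1 hlo) hne.symm,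
          lt_of_le_of_ne (not_lt.1 hcon) hne2⟩
      refine ⟨_, ⟨⟨g1, ?_⟩, ⟨hcj, ?_⟩, ?_⟩, _, mem_PT hic.ne hσ g1 hcv ?_, _,
        mem_PT hic.ne hy g2 hcv ?_, ?_, Or.inl (square_A2 σ hic hcj hv hhi)⟩
      · convert g2 using 1
        ext p; congr 1; simp only [GridRect.endPerm, trans_apply, swap_apply_def]; grind
      · simp only [trans_apply, swap_apply_def]; grind
      · rintro ⟨q, q1, q2, q3, q4⟩
        simp only [trans_apply, swap_apply_def] at q1 q2 q3 q4
        apply hem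
        refine ⟨q, ?_⟩
        grind
      · exact hv.trans hhi
      · simp only [trans_apply, swap_apply_def]; grind
      · simp only; omega
  · let c : Fin (m + n) := ⟨j - 1, by omega⟩
    have hcv : (j : ℕ) = c + 1 := by simp only [c]; omega
    have hic : i < c := by rw [Fin.lt_def]; omega
    have hcj : c < j := by rw [Fin.lt_def]; omega
    have hblk : (c : ℕ) < m ↔ (j : ℕ) < m := by omega
    clear_value c
    have hne : σ c ≠ σ i := fun h => hic.ne' (σ.injective h)
    have hne2 : σ c ≠ σ j := fun h => hcj.ne (σ.injective h)
    have g1 := gen_swap hσ hblk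
    have g2 := gen_swap hy hblk
    by_cases hlo : σ c < σ i
    · refine ⟨_, ⟨⟨g1, ?_⟩, ⟨hic, ?_⟩, ?_⟩, _, mem_PT hcj.ne hσ g1 hcv ?_, _,
        mem_PT hcj.ne hy g2 hcv ?_, ?_, Or.inl (square_B1 σ hic hcj hlo hv)⟩
      · convert g2 using 1
        ext p; congr 1; simp only [GridRect.endPerm, trans_apply, swap_apply_def]; grind
      · simp only [trans_apply, swap_apply_def]; grind
      · rintro ⟨q, q1, q2, q3, q4⟩
        simp only [trans_apply, swap_apply_def] at q1 q2 q3 q4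
        apply hem
        refine ⟨q, ?_⟩
        grind
      · exact hlo.trans hv
      · simp only [trans_apply, swap_apply_def]; grind
      · simp only; omega
    · have hhi : σ j < σ c := by
        by_contra hcon
        exact hem ⟨c, hic, hcj, lt_of_le_of_ne (not_lt.1 hlo) hne.symm,
          lt_of_le_of_ne (not_lt.1 hcon) hne2⟩
      refine ⟨_, ⟨⟨g1, ?_⟩, ⟨hic, ?_⟩, ?_⟩, _, mem_PT hcj.ne g1 ?_ hcv ?_, _,
        mem_PT hcj.ne g2 ?_ hcv ?_, ?_, Or.inr (square_B2 σ hic hcj hv hhi)⟩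
      · convert g2 using 1
        ext p; congr 1; simp only [GridRect.endPerm, trans_apply, swap_apply_def]; grind
      · simp only [trans_apply, swap_apply_def]; grind
      · rintro ⟨q, q1, q2, q3, q4⟩
        simp only [trans_apply, swap_apply_def] at q1 q2 q3 q4
        apply hem
        refine ⟨q, ?_⟩
        grind
      · convert hσ using 1
        ext p; simp
      · simpa using hhi
      · convert hy using 1
        ext p; simp
      · simp only [trans_apply, swap_apply_def]; grind
      · simp only; omega
end

section
open Equiv

/-- A weight that decreases along descents. -/
def permWt {N : ℕ} (σ : Perm (Fin N)) : ℕ := ∑ k : Fin N, (N - (k : ℕ)) * (σ k : ℕ)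

theorem permWt_lt {N : ℕ} (σ : Perm (Fin N)) (c : ℕ) (hc : c + 1 < N)
    (h : σ (colFin' c hc) < σ (colFin c hc)) : permWt (tmul σ c hc) < permWt σ := by
  unfold permWt
  have hne := colNe c hc
  have key : ∀ f : Fin N → ℕ, ∑ k, f k = f (colFin c hc) + (f (colFin' c hc) +
      ∑ k ∈ (Finset.univ.erase (colFin c hc)).erase (colFin' c hc), f k) := by
    intro f
    rw [Finset.add_sum_erase _ _ (by simp [hne.symm]), Finset.add_sum_erase _ _ (by simp)]
  rw [key, key (fun k => (N - (k : ℕ)) * (σ k : ℕ))]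
  have hs : ∑ k ∈ (Finset.univ.erase (colFin c hc)).erase (colFin' c hc),
        (N - (k : ℕ)) * (tmul σ c hc k : ℕ) =
      ∑ k ∈ (Finset.univ.erase (colFin c hc)).erase (colFin' c hc), (N - (k : ℕ)) * (σ k : ℕ) := by
    apply Finset.sum_congr rfl
    intro k hk
    simp only [Finset.mem_erase, Finset.mem_univ, and_true] at hk
    rw [tmul, trans_apply, swap_apply_of_ne_of_ne hk.2 hk.1]
  rw [hs]
  have e1 : tmul σ c hc (colFin c hc) = σ (colFin' c hc) := by simp [tmul]
  have e2 : tmul σ c hc (colFin' c hc) = σ (colFin c hc) := by simp [tmul]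
  have e3 : N - (colFin c hc : ℕ) = (N - (colFin' c hc : ℕ)) + 1 := by
    simp only [colFin, colFin']; omega
  rw [Fin.lt_def] at h
  simp only [e1, e2, e3]
  nlinarith

open Classical in
/-- A section `Σ → A` lifting the generators, adapted to the thin sign assignment `S₀`. -/
noncomputable def sec {A : Type} [Ring A] {N : ℕ} (E : Fin N → A) (S₀ : GridRect N → ℤ)
    (σ : Perm (Fin N)) : A :=
  if h : ∃ c, ∃ hc : c + 1 < N, σ (colFin' c hc) < σ (colFin c hc) then
    S₀ (edgeRect σ h.choose h.choose_spec.choose) •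
      (sec E S₀ (tmul σ h.choose h.choose_spec.choose) *
        (E (colFin h.choose h.choose_spec.choose) - E (colFin' h.choose h.choose_spec.choose)))
  else 1
termination_by permWt σ
decreasing_by exact permWt_lt _ _ _ h.choose_spec.choose_spec

theorem gen_desc {m n : ℕ} {σ : Perm (Fin (m + n))} (h : σ ∈ GenSet m n) (c : ℕ)
    (hc : c + 1 < m + n) (hd : σ (colFin' c hc) < σ (colFin c hc)) : tmul σ c hc ∈ GenSet m n := by
  by_cases hb : ((colFin c hc : Fin (m + n)) : ℕ) < m ↔ ((colFin' c hc : Fin (m + n)) : ℕ) < m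
  · exact gen_swap h hb
  · have h1 := h (colFin c hc)
    have h2 := h (colFin' c hc)
    rw [Fin.lt_def] at hd
    intro p
    have hp := h p
    simp only [tmul, trans_apply, swap_apply_def]
    have hc1 : ((colFin c hc : Fin (m + n)) : ℕ) = c := rfl
    have hc2 : ((colFin' c hc : Fin (m + n)) : ℕ) = c + 1 := rfl
    split_ifs with q1 q2
    · subst q1; omega
    · subst q2; omega
    · exact hp

theorem edge_mem {m n : ℕ} {σ : Perm (Fin (m + n))} (h : σ ∈ GenSet m n) (c : ℕ)
    (hc : c + 1 < m + n) (h' : tmul σ c hc ∈ GenSet m n) : edgeRect σ c hc ∈ PTSet m n := by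
  unfold edgeRect
  split_ifs with hlt
  · exact mem_PT _ h h' rfl hlt
  · refine mem_PT _ h' ?_ rfl ?_
    · convert h using 1
      ext p; simp [tmul]
    · simp only [tmul, trans_apply, swap_apply_left, swap_apply_right]
      exact lt_of_le_of_ne (not_lt.1 hlt) (fun e => colNe c hc (σ.injective e.symm))

theorem tmul_tmul {N : ℕ} (σ : Perm (Fin N)) (c : ℕ) (hc : c + 1 < N) :
    tmul (tmul σ c hc) c hc = σ := by
  ext p; simp [tmul]

theorem edge_tmul {N : ℕ} (σ : Perm (Fin N)) (c : ℕ) (hc : c + 1 < N) :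
    edgeRect (tmul σ c hc) c hc = edgeRect σ c hc := by
  have hne : σ (colFin c hc) ≠ σ (colFin' c hc) := fun e => colNe c hc (σ.injective e)
  have e1 : tmul σ c hc (colFin c hc) = σ (colFin' c hc) := by simp [tmul]
  have e2 : tmul σ c hc (colFin' c hc) = σ (colFin c hc) := by simp [tmul]
  unfold edgeRect
  rw [e1, e2, tmul_tmul]
  rcases lt_or_gt_of_ne hne with h | h
  · rw [if_pos h, if_neg (not_lt.2 h.le)]
  · rw [if_pos h, if_neg (not_lt.2 h.le)]

theorem tmul_apply_left {N : ℕ} (σ : Perm (Fin N)) (c : ℕ) (hc : c + 1 < N) :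
    tmul σ c hc (colFin c hc) = σ (colFin' c hc) := by simp [tmul]

theorem tmul_apply_right {N : ℕ} (σ : Perm (Fin N)) (c : ℕ) (hc : c + 1 < N) :
    tmul σ c hc (colFin' c hc) = σ (colFin c hc) := by simp [tmul]

theorem tmul_apply_ne {N : ℕ} (σ : Perm (Fin N)) (c : ℕ) (hc : c + 1 < N) (p : Fin N)
    (h1 : (p : ℕ) ≠ c) (h2 : (p : ℕ) ≠ c + 1) : tmul σ c hc p = σ p := by
  rw [tmul, trans_apply, swap_apply_of_ne_of_ne]
  · intro h; apply h1; rw [h]; rfl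
  · intro h; apply h2; rw [h]; rfl

/-- The one-step property of `sec` at `σ`. -/
def StepAt {A : Type} [Ring A] {N : ℕ} (E : Fin N → A) (S₀ : GridRect N → ℤ)
    (σ : Perm (Fin N)) : Prop :=
  ∀ (c : ℕ) (hc : c + 1 < N), σ (colFin' c hc) < σ (colFin c hc) →
    sec E S₀ σ = S₀ (edgeRect σ c hc) • (sec E S₀ (tmul σ c hc) * (E (colFin c hc) - E (colFin' c hc)))

variable {A : Type} [Ring A] {m n : ℕ} (E : Fin (m + n) → A) (hE1 : ∀ i, E i * E i = 1)
    (hE : ∀ i j, i ≠ j → E i * E j = - (E j * E i)) (S₀ : GridRect (m + n) → ℤ)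
    (h₀val : ∀ r ∈ PTSet m n, S₀ r = 1 ∨ S₀ r = -1)

include hE h₀val in
theorem far_step (h₀sq : SqCond m n S₀) {σ : Perm (Fin (m + n))} (hσ : σ ∈ GenSet m n)
    (ih : ∀ ρ ∈ GenSet m n, permWt ρ < permWt σ → StepAt E S₀ ρ)
    (c d : ℕ) (hc : c + 1 < m + n) (hd : d + 1 < m + n) (hcd : c + 2 ≤ d ∨ d + 2 ≤ c)
    (dc : σ (colFin' c hc) < σ (colFin c hc)) (dd : σ (colFin' d hd) < σ (colFin d hd)) :
    S₀ (edgeRect σ c hc) • (sec E S₀ (tmul σ c hc) * (E (colFin c hc) - E (colFin' c hc))) =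
    S₀ (edgeRect σ d hd) • (sec E S₀ (tmul σ d hd) * (E (colFin d hd) - E (colFin' d hd))) := by
  have v1 : ((colFin c hc : Fin (m + n)) : ℕ) = c := rfl
  have v2 : ((colFin' c hc : Fin (m + n)) : ℕ) = c + 1 := rfl
  have v3 : ((colFin d hd : Fin (m + n)) : ℕ) = d := rfl
  have v4 : ((colFin' d hd : Fin (m + n)) : ℕ) = d + 1 := rfl
  have gc := gen_desc hσ c hc dc
  have gd := gen_desc hσ d hd dd
  have dcd : tmul σ c hc (colFin' d hd) < tmul σ c hc (colFin d hd) := by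
    rwa [tmul_apply_ne _ _ _ _ (by omega) (by omega), tmul_apply_ne _ _ _ _ (by omega) (by omega)]
  have ddc : tmul σ d hd (colFin' c hc) < tmul σ d hd (colFin c hc) := by
    rwa [tmul_apply_ne _ _ _ _ (by omega) (by omega), tmul_apply_ne _ _ _ _ (by omega) (by omega)]
  have gcd := gen_desc gc d hd dcd
  have gdc := gen_desc gd c hc ddc
  have hcomm : tmul (tmul σ d hd) c hc = tmul (tmul σ c hc) d hd := by
    ext p; congr 1
    simp only [tmul, trans_apply]
    congr 1
    simp only [swap_apply_def]
    have n1 : colFin c hc ≠ colFin d hd := by rw [Ne, Fin.ext_iff]; omega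
    have n2 : colFin c hc ≠ colFin' d hd := by rw [Ne, Fin.ext_iff]; omega
    have n3 : colFin' c hc ≠ colFin d hd := by rw [Ne, Fin.ext_iff]; omega
    have n4 : colFin' c hc ≠ colFin' d hd := by rw [Ne, Fin.ext_iff]; omega
    grind
  rw [ih _ gc (permWt_lt σ c hc dc) d hd dcd, ih _ gd (permWt_lt σ d hd dd) c hc ddc, hcomm]
  have hs := h₀sq σ c d hc hd hcd hσ gc gd gcd
  simp only [smul_mul_assoc, smul_smul, mul_assoc]
  rw [rel_disj E hE (i := colFin d hd) (j := colFin' d hd) (k := colFin c hc) (l := colFin' c hc)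
    (by rw [Ne, Fin.ext_iff]; omega) (by rw [Ne, Fin.ext_iff]; omega)
    (by rw [Ne, Fin.ext_iff]; omega) (by rw [Ne, Fin.ext_iff]; omega)]
  rw [mul_neg, smul_neg, ← neg_smul]
  congr 1
  rcases h₀val _ (edge_mem hσ c hc gc) with q1 | q1 <;>
  rcases h₀val _ (edge_mem hσ d hd gd) with q2 | q2 <;>
  rcases h₀val _ (edge_mem gc d hd gcd) with q3 | q3 <;>
  rcases h₀val _ (edge_mem gd c hc gdc) with q4 | q4 <;>
  simp [q1, q2, q3, q4] at hs ⊢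

include hE hE1 h₀val in
theorem near_step (h₀hex : HexCond m n S₀) {σ : Perm (Fin (m + n))} (hσ : σ ∈ GenSet m n)
    (ih : ∀ ρ ∈ GenSet m n, permWt ρ < permWt σ → StepAt E S₀ ρ)
    (c : ℕ) (hc : c + 1 < m + n) (hd : c + 1 + 1 < m + n)
    (dc : σ (colFin' c hc) < σ (colFin c hc))
    (dd : σ (colFin' (c + 1) hd) < σ (colFin (c + 1) hd)) :
    S₀ (edgeRect σ c hc) • (sec E S₀ (tmul σ c hc) * (E (colFin c hc) - E (colFin' c hc))) =
    S₀ (edgeRect σ (c + 1) hd) •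
      (sec E S₀ (tmul σ (c + 1) hd) * (E (colFin (c + 1) hd) - E (colFin' (c + 1) hd))) := by
  have v1 : ((colFin c hc : Fin (m + n)) : ℕ) = c := rfl
  have v2 : ((colFin' (c + 1) hd : Fin (m + n)) : ℕ) = c + 1 + 1 := rfl
  have v3 : ((colFin (c + 1) hd : Fin (m + n)) : ℕ) = c + 1 := rfl
  have hmid : colFin' c hc = colFin (c + 1) hd := rfl
  -- values along the hexagon
  have d1 : tmul σ c hc (colFin' (c + 1) hd) < tmul σ c hc (colFin (c + 1) hd) := by
    rw [← hmid, tmul_apply_right, tmul_apply_ne _ _ _ _ (by omega) (by omega)]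
    exact dd.trans dc
  have d2 : tmul (tmul σ c hc) (c + 1) hd (colFin' c hc) <
      tmul (tmul σ c hc) (c + 1) hd (colFin c hc) := by
    rw [hmid, tmul_apply_left, tmul_apply_ne _ (c + 1) _ _ (by omega) (by omega), tmul_apply_left,
      tmul_apply_ne _ _ _ _ (by omega) (by omega)]
    exact dd
  have d3 : tmul σ (c + 1) hd (colFin' c hc) < tmul σ (c + 1) hd (colFin c hc) := by
    rw [hmid, tmul_apply_left, tmul_apply_ne _ _ _ _ (by omega) (by omega)]
    exact dd.trans dc
  have d4 : tmul (tmul σ (c + 1) hd) c hc (colFin' (c + 1) hd) <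
      tmul (tmul σ (c + 1) hd) c hc (colFin (c + 1) hd) := by
    rw [← hmid, tmul_apply_right, tmul_apply_ne _ c _ _ (by omega) (by omega), tmul_apply_right,
      tmul_apply_ne _ _ _ _ (by omega) (by omega)]
    exact dc
  have g1 := gen_desc hσ c hc dc
  have g2 := gen_desc g1 (c + 1) hd d1
  have g3 := gen_desc g2 c hc d2
  have k1 := gen_desc hσ (c + 1) hd dd
  have k2 := gen_desc k1 c hc d3
  have k3 := gen_desc k2 (c + 1) hd d4
  have w1 := permWt_lt σ c hc dc
  have w2 := permWt_lt _ (c + 1) hd d1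
  have u1 := permWt_lt σ (c + 1) hd dd
  have u2 := permWt_lt _ c hc d3
  have hbr : tmul (tmul (tmul σ (c + 1) hd) c hc) (c + 1) hd =
      tmul (tmul (tmul σ c hc) (c + 1) hd) c hc := by
    ext p; congr 1
    simp only [tmul, trans_apply]
    congr 1
    simp only [hmid, swap_apply_def]
    have n1 : colFin c hc ≠ colFin (c + 1) hd := by rw [Ne, Fin.ext_iff]; omega
    have n2 : colFin c hc ≠ colFin' (c + 1) hd := by rw [Ne, Fin.ext_iff]; omega
    have n3 : colFin (c + 1) hd ≠ colFin' (c + 1) hd := by rw [Ne, Fin.ext_iff]; omega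
    grind
  have hs := h₀hex σ c hc hd hσ g1 g2 g3 k2 k1
  rw [ih _ g1 w1 _ hd d1, ih _ g2 (w2.trans w1) _ hc d2, ih _ k1 u1 _ hc d3,
    ih _ k2 (u2.trans u1) _ hd d4, hbr]
  rw [← hbr, edge_tmul, edge_tmul, edge_tmul] at hs
  simp only [smul_mul_assoc, smul_smul]
  have hb := rel_braid E hE1 hE (a := colFin c hc) (b := colFin (c + 1) hd)
    (c := colFin' (c + 1) hd) (by rw [Ne, Fin.ext_iff]; omega) (by rw [Ne, Fin.ext_iff]; omega)
    (by rw [Ne, Fin.ext_iff]; omega)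
  rw [hmid]
  simp only [mul_assoc] at hb ⊢
  rw [hb]
  congr 1
  rcases h₀val _ (edge_mem hσ c hc g1) with q1 | q1 <;>
  rcases h₀val _ (edge_mem g1 _ hd g2) with q2 | q2 <;>
  rcases h₀val _ (edge_mem g2 _ hc g3) with q3 | q3 <;>
  rcases h₀val _ (edge_mem hσ _ hd k1) with q4 | q4 <;>
  rcases h₀val _ (edge_mem k1 _ hc k2) with q5 | q5 <;>
  rcases h₀val _ (edge_mem k2 _ hd k3) with q6 | q6 <;>
  simp [q1, q2, q3, q4, q5, q6] at hs ⊢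

include hE hE1 h₀val in
theorem sec_step (h₀sq : SqCond m n S₀) (h₀hex : HexCond m n S₀) :
    ∀ (k : ℕ) (σ : Perm (Fin (m + n))), permWt σ = k → σ ∈ GenSet m n → StepAt E S₀ σ := by
  intro k
  induction k using Nat.strong_induction_on with
  | _ k ihk =>
    intro σ hk hσ c hc dc
    have ih : ∀ ρ ∈ GenSet m n, permWt ρ < permWt σ → StepAt E S₀ ρ :=
      fun ρ hρ hlt => ihk _ (hk ▸ hlt) ρ rfl hρ
    have h : ∃ c, ∃ hc : c + 1 < m + n, σ (colFin' c hc) < σ (colFin c hc) := ⟨c, hc, dc⟩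
    rw [sec, dif_pos h]
    suffices hsuff : ∀ (d : ℕ) (hd : d + 1 < m + n) (_ : σ (colFin' d hd) < σ (colFin d hd)),
        S₀ (edgeRect σ d hd) •
          (sec E S₀ (tmul σ d hd) * (E (colFin d hd) - E (colFin' d hd))) =
        S₀ (edgeRect σ c hc) •
          (sec E S₀ (tmul σ c hc) * (E (colFin c hc) - E (colFin' c hc))) from
      hsuff _ _ h.choose_spec.choose_spec
    intro d hd dd
    rcases lt_trichotomy c d with hcd | hcd | hcd
    · by_cases hd1 : d = c + 1
      · subst hd1
        exact (near_step E hE1 hE S₀ h₀val h₀hex hσ ih c hc hd dc dd).symm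
      · exact far_step E hE S₀ h₀val h₀sq hσ ih d c hd hc (by omega) dd dc
    · subst hcd
      rfl
    · by_cases hd1 : c = d + 1
      · subst hd1
        exact near_step E hE1 hE S₀ h₀val h₀hex hσ ih d hd hc dd dc
      · exact far_step E hE S₀ h₀val h₀sq hσ ih d c hd hc (by omega) dd dc

end

section
open Equiv

variable {A : Type} [Ring A] [Algebra ℚ A] {m n : ℕ} (E : Fin (m + n) → A)
    (hE1 : ∀ i, E i * E i = 1)
    (hE : ∀ i j, i ≠ j → E i * E j = - (E j * E i)) (S₀ : GridRect (m + n) → ℤ)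
    (h₀val : ∀ r ∈ PTSet m n, S₀ r = 1 ∨ S₀ r = -1)

include hE1 hE in
theorem unit_diff {i j : Fin (m + n)} (hij : i ≠ j) : IsUnit (E i - E j) := by
  have h := rel_sq E hE1 hE hij
  have h2 : ((1 / 2 : ℚ) • (2 : A)) = 1 := by
    rw [show (2 : A) = algebraMap ℚ A 2 from (map_ofNat (algebraMap ℚ A) 2).symm, Algebra.smul_def, ← map_mul]
    norm_num
  exact ⟨⟨E i - E j, (1 / 2 : ℚ) • (E i - E j), by rw [mul_smul_comm, h, h2],
    by rw [smul_mul_assoc, h, h2]⟩, rfl⟩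

theorem isUnit_sign_smul {ε : ℤ} (hε : ε = 1 ∨ ε = -1) {a : A} (ha : IsUnit a) :
    IsUnit (ε • a) := by
  rcases hε with rfl | rfl
  · simpa using ha
  · simpa using ha.neg

include hE1 hE h₀val in
theorem isUnit_sec : ∀ (k : ℕ) (σ : Perm (Fin (m + n))), permWt σ = k → σ ∈ GenSet m n →
    IsUnit (sec E S₀ σ) := by
  intro k
  induction k using Nat.strong_induction_on with
  | _ k ihk =>
    intro σ hk hσ
    rw [sec]
    split_ifs with h
    · have hd := h.choose_spec.choose_spec
      have hg := gen_desc hσ _ _ hd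
      have hlt := permWt_lt σ _ _ hd
      exact isUnit_sign_smul (h₀val _ (edge_mem hσ _ _ hg))
        ((ihk _ (hk ▸ hlt) _ rfl hg).mul (unit_diff E hE1 hE (colNe _ _)))
    · exact isUnit_one

include hE1 hE h₀val in
theorem sec_thin (h₀sq : SqCond m n S₀) (h₀hex : HexCond m n S₀) (r : GridRect (m + n))
    (hr : r ∈ PTSet m n) :
    sec E S₀ r.perm * rectElt E r = S₀ r • sec E S₀ r.endPerm := by
  have hval := h₀val r hr
  obtain ⟨σ, i, j, hij⟩ := r
  obtain ⟨⟨hσ, hy⟩, ⟨hlt, hv⟩, ht⟩ := hr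
  simp only [GridRect.Thin, GridRect.endPerm, rectElt] at *
  have hc : (i : ℕ) + 1 < m + n := by have := j.2; omega
  have hi : i = colFin (i : ℕ) hc := rfl
  have hj : j = colFin' (i : ℕ) hc := Fin.ext ht
  have hend : (swap i j).trans σ = tmul σ i hc := by rw [hj]; rfl
  have hedge : edgeRect σ i hc = ⟨σ, i, j, hij⟩ := by
    unfold edgeRect
    rw [if_pos (by rw [← hi, ← hj]; exact hv)]
    simp only [← hi, ← hj]
  rw [hend] at hy ⊢
  have hstep := sec_step E hE1 hE S₀ h₀val h₀sq h₀hex _ _ rfl hy i hc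
    (by rw [tmul_apply_left, tmul_apply_right, ← hi, ← hj]; exact hv)
  rw [edge_tmul, tmul_tmul, hedge, ← hi, ← hj] at hstep
  rw [hstep, smul_smul]
  rcases hval with h | h <;> simp [h]

include hE1 hE h₀val in
theorem exists_sign (h₀sq : SqCond m n S₀) (h₀hex : HexCond m n S₀) :
    ∀ (k : ℕ) (r : GridRect (m + n)), (r.j : ℕ) - r.i = k → r ∈ PESet m n →
    ∃ ε : ℤ, (ε = 1 ∨ ε = -1) ∧ sec E S₀ r.perm * rectElt E r = ε • sec E S₀ r.endPerm := by
  intro k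
  induction k using Nat.strong_induction_on with
  | _ k ihk =>
    intro r hk hr
    by_cases ht : r.Thin
    · exact ⟨S₀ r, h₀val r ⟨hr.1, hr.2.1, ht⟩,
        sec_thin E hE1 hE S₀ h₀val h₀sq h₀hex r ⟨hr.1, hr.2.1, ht⟩⟩
    · obtain ⟨r', hr', e1, he1, e2, he2, hw, hsq⟩ := exists_reduction r hr ht
      obtain ⟨ε, hε, h'⟩ := ihk _ (hk ▸ hw) r' rfl hr'
      have s1 := sec_thin E hE1 hE S₀ h₀val h₀sq h₀hex e1 he1
      have s2 := sec_thin E hE1 hE S₀ h₀val h₀sq h₀hex e2 he2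
      have p1 := h₀val e1 he1
      have p2 := h₀val e2 he2
      have q1 := PT_sub_PE he1
      have q2 := PT_sub_PE he2
      refine ⟨-(S₀ e1 * ε * S₀ e2), ?_, ?_⟩
      · rcases p1 with p1 | p1 <;> rcases p2 with p2 | p2 <;> rcases hε with hε | hε <;>
          simp [p1, p2, hε]
      rcases hsq with hsq | hsq
      · have hrel := square_rel E hE1 hE hsq hr.2.1 q2.2.1 q1.2.1 hr'.2.1 hr.2.2 q1.2.2
        obtain ⟨-, a1, a2, a3, a4, -, -⟩ := hsq
        have hu : IsUnit (rectElt E e2) := unit_diff E hE1 hE e2.hij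
        apply hu.mul_right_cancel
        rw [mul_assoc, hrel, mul_neg, ← mul_assoc, ← a1, s1, smul_mul_assoc, ← a3, h', a4,
          smul_mul_assoc, ← a2, s2, smul_smul, smul_smul, ← neg_smul]
        congr 1
        rcases p2 with p2 | p2 <;> simp [p2]
      · have hrel := square_rel E hE1 hE hsq q1.2.1 hr.2.1 hr'.2.1 q2.2.1 q1.2.2 hr'.2.2
        obtain ⟨-, a1, a2, a3, a4, -, -⟩ := hsq
        have h3 : sec E S₀ r.perm = S₀ e1 • (sec E S₀ e1.perm * rectElt E e1) := by
          rw [s1, smul_smul, a2]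
          rcases p1 with p1 | p1 <;> simp [p1]
        rw [h3, smul_mul_assoc, mul_assoc, hrel, mul_neg, ← mul_assoc, ← a1, h', smul_mul_assoc,
          ← a3, s2, a4, smul_neg, smul_smul, smul_smul, ← neg_smul, mul_assoc]

end

/-- Given a `{1,−1}`-valued map `S₀` on the planar thin rectangles in `F'` satisfying (Sq)
and (Hex), there is exactly one `{1,−1}`-valued map on the planar empty rectangles in `F'`
extending `S₀` and satisfying (S-3) with respect to squares all four of whose rectangles
are planar, empty, and in `F'`. -/
theorem unique_extension_to_planar_empty (m n : ℕ) (hm : 1 ≤ m) (hn : 1 ≤ n)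
    (S₀ : GridRect (m + n) → ℤ)
    (h₀val : ∀ r ∈ PTSet m n, S₀ r = 1 ∨ S₀ r = -1)
    (h₀sq : SqCond m n S₀) (h₀hex : HexCond m n S₀) :
    ∃ S : GridRect (m + n) → ℤ,
      ((∀ r ∈ PESet m n, S r = 1 ∨ S r = -1) ∧ (∀ r ∈ PTSet m n, S r = S₀ r) ∧
        SqPropOn (PESet m n) S) ∧
      ∀ S' : GridRect (m + n) → ℤ,
        ((∀ r ∈ PESet m n, S' r = 1 ∨ S' r = -1) ∧ (∀ r ∈ PTSet m n, S' r = S₀ r) ∧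
          SqPropOn (PESet m n) S') →
        ∀ r ∈ PESet m n, S' r = S r := by
  classical
  obtain ⟨A, _, _, _, E, hE1, hE⟩ := exists_clifford (m + n)
  have : CharZero A := algebraRat.charZero A
  have hex := fun r hr => exists_sign E hE1 hE S₀ h₀val h₀sq h₀hex _ r rfl hr
  have huniq : ∀ (u : A) (a b : ℤ), IsUnit u → a • u = b • u → a = b := by
    intro u a b hu h
    rw [zsmul_eq_mul, zsmul_eq_mul] at h
    exact Int.cast_injective (hu.mul_right_cancel h)
  choose! S hS1 hS2 using hex
  have hPT : ∀ r ∈ PTSet m n, S r = S₀ r := by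
    intro r hr
    have h1 := hS2 r (PT_sub_PE hr)
    have h2 := sec_thin E hE1 hE S₀ h₀val h₀sq h₀hex r hr
    exact huniq _ _ _ (isUnit_sec E hE1 hE S₀ h₀val _ _ rfl hr.1.2) (h1.symm.trans h2)
  have hSq : SqPropOn (PESet m n) S := by
    intro r1 r2 r3 r4 hsq h1 h2 h3 h4
    have hrel := square_rel E hE1 hE hsq h1.2.1 h2.2.1 h3.2.1 h4.2.1 h1.2.2 h3.2.2
    obtain ⟨-, a1, a2, a3, a4, -, -⟩ := hsq
    have hu := isUnit_sec E hE1 hE S₀ h₀val _ _ rfl h2.1.2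
    have key : (S r1 * S r2) • sec E S₀ r2.endPerm = (-(S r3 * S r4)) • sec E S₀ r2.endPerm := by
      have t1 : sec E S₀ r1.perm * (rectElt E r1 * rectElt E r2) =
          (S r1 * S r2) • sec E S₀ r2.endPerm := by
        rw [← mul_assoc, hS2 r1 h1, smul_mul_assoc, ← a2, hS2 r2 h2, smul_smul]
      have t2 : sec E S₀ r1.perm * (rectElt E r3 * rectElt E r4) =
          (S r3 * S r4) • sec E S₀ r2.endPerm := by
        rw [← mul_assoc, ← a1, hS2 r3 h3, smul_mul_assoc, ← a3, hS2 r4 h4, smul_smul, a4]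
      rw [← t1, hrel, mul_neg, t2, neg_smul]
    have h := huniq _ _ _ hu key
    rw [mul_assoc, h]
    rcases hS1 r3 h3 with p3 | p3 <;> rcases hS1 r4 h4 with p4 | p4 <;> simp [p3, p4]
  refine ⟨S, ⟨hS1, hPT, hSq⟩, ?_⟩
  rintro S' ⟨h1', h2', h3'⟩
  have main : ∀ (k : ℕ) (r : GridRect (m + n)), (r.j : ℕ) - r.i = k → r ∈ PESet m n →
      S' r = S r := by
    intro k
    induction k using Nat.strong_induction_on with
    | _ k ihk =>
      intro r hk hr
      by_cases ht : r.Thin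
      · have hr' : r ∈ PTSet m n := ⟨hr.1, hr.2.1, ht⟩
        rw [h2' r hr', hPT r hr']
      · obtain ⟨r', hr', e1, he1, e2, he2, hw, hsq⟩ := exists_reduction r hr ht
        have i1 := ihk _ (hk ▸ hw) r' rfl hr'
        have i2 : S' e1 = S e1 := by rw [h2' e1 he1, hPT e1 he1]
        have i3 : S' e2 = S e2 := by rw [h2' e2 he2, hPT e2 he2]
        have q1 := PT_sub_PE he1
        have q2 := PT_sub_PE he2
        have fin : S' r * (S r' * S e1 * S e2) = S r * (S r' * S e1 * S e2) := by
          rcases hsq with hsq | hsq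
          · have w1 := h3' _ _ _ _ hsq hr q2 q1 hr'
            have w2 := hSq _ _ _ _ hsq hr q2 q1 hr'
            rw [i1, i2, i3] at w1
            linear_combination w1 - w2
          · have w1 := h3' _ _ _ _ hsq q1 hr hr' q2
            have w2 := hSq _ _ _ _ hsq q1 hr hr' q2
            rw [i1, i2, i3] at w1
            linear_combination w1 - w2
        rcases hS1 r' hr' with p1 | p1 <;> rcases hS1 e1 q1 with p2 | p2 <;>
          rcases hS1 e2 q2 with p3 | p3 <;> simpa [p1, p2, p3] using fin
  exact fun r hr => main _ r rfl hr
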